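/- Harmony base lemma: For any consistent set E ⊆ Φ, any formula ¬[C]^T_X φ ∈ E, any family {D_i}_{i∈I} of pairwise disjoint subsets of the coalition C, and any set {[D_i]^T_X ψ_i}_{i∈I} of formulae from E, if F = {χ | B^∅_X χ ∈ E} ∪ {B^T_Y τ → τ | τ ∈ Φ, Y ⊆ V} and G = {¬φ} ∪ {ψ_i}_{i∈I} ∪ {σ | B^∅_∅ σ ∈ E} ∪ {B^T_Z η → η | η ∈ Φ, Z ⊆ V}, then the pair (F, G) is in T-harmony. -/

import Mathlib

/- Language: formulas over atomic propositions P, data variables V, actors 𝒜 = A.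
   `bel T X φ` is B^T_X φ ; `str C T X φ` is [C]^T_X φ. -/
inductive Formula (P V A : Type) : Type
  | atom : P → Formula P V A
  | neg : Formula P V A → Formula P V A
  | imp : Formula P V A → Formula P V A → Formula P V A
  | bel : Set V → Set V → Formula P V A → Formula P V A
  | str : Set A → Set V → Set V → Formula P V A → Formula P V A

variable {P V A : Type}

/-- Propositional tautologies: true under every valuation respecting ¬ and →. -/
def Tautology (φ : Formula P V A) : Prop :=
  ∀ v : Formula P V A → Prop,
    (∀ ψ, v (Formula.neg ψ) ↔ ¬ v ψ) →
    (∀ ψ χ, v (Formula.imp ψ χ) ↔ (v ψ → v χ)) →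
    v φ

/-- Theorems of the logical system of doxastic strategies. -/
inductive Thm : Formula P V A → Prop
  | taut {φ : Formula P V A} : Tautology φ → Thm φ
  | truth {X : Set V} {φ : Formula P V A} :
      Thm (Formula.imp (Formula.bel ∅ X φ) φ)
  | negIntro {T X : Set V} {φ : Formula P V A} :
      Thm (Formula.imp (Formula.neg (Formula.bel T X φ))
        (Formula.bel ∅ X (Formula.neg (Formula.bel T X φ))))
  | distrib {T X : Set V} {φ ψ : Formula P V A} :
      Thm (Formula.imp (Formula.bel T X (Formula.imp φ ψ))
        (Formula.imp (Formula.bel T X φ) (Formula.bel T X ψ)))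
  | trust {T X Y : Set V} {φ : Formula P V A} :
      Thm (Formula.bel T X (Formula.imp (Formula.bel T Y φ) φ))
  | monoB {T T' X X' : Set V} {φ : Formula P V A} :
      T ⊆ T' → X ⊆ X' →
      Thm (Formula.imp (Formula.bel T X φ) (Formula.bel T' X' φ))
  | monoS {C C' : Set A} {T T' X X' : Set V} {φ : Formula P V A} :
      T ⊆ T' → X ⊆ X' → C ⊆ C' →
      Thm (Formula.imp (Formula.str C T X φ) (Formula.str C' T' X' φ))
  | coop {C D : Set A} {T X : Set V} {φ ψ : Formula P V A} :
      C ∩ D = ∅ →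
      Thm (Formula.imp (Formula.str C T X (Formula.imp φ ψ))
        (Formula.imp (Formula.str D T X φ) (Formula.str (C ∪ D) T X ψ)))
  | strIntro₁ {C : Set A} {T X : Set V} {φ : Formula P V A} :
      Thm (Formula.imp (Formula.str C T X φ) (Formula.bel T X (Formula.str C T X φ)))
  | strIntro₂ {C : Set A} {T X : Set V} {φ : Formula P V A} :
      Thm (Formula.imp (Formula.bel T X (Formula.str C T X φ)) (Formula.str C T X φ))
  | unavoid {T X Y : Set V} {φ : Formula P V A} :
      Thm (Formula.imp (Formula.bel T X (Formula.str ∅ T Y φ)) (Formula.str ∅ T X φ))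
  | pub {T : Set V} {φ : Formula P V A} :
      Thm (Formula.imp (Formula.bel T ∅ φ) (Formula.str ∅ T ∅ φ))
  | mp {φ ψ : Formula P V A} : Thm (Formula.imp φ ψ) → Thm φ → Thm ψ
  | nec {φ : Formula P V A} : Thm φ → Thm (Formula.bel ∅ ∅ φ)

/-- `Deduces F φ`: φ is derivable from F together with the theorems using only Modus Ponens. -/
inductive Deduces (F : Set (Formula P V A)) : Formula P V A → Prop
  | thm {φ : Formula P V A} : Thm φ → Deduces F φ
  | mem {φ : Formula P V A} : φ ∈ F → Deduces F φ
  | mp {φ ψ : Formula P V A} :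
      Deduces F (Formula.imp φ ψ) → Deduces F φ → Deduces F ψ

def Consistent (F : Set (Formula P V A)) : Prop :=
  ¬ ∃ φ : Formula P V A, Deduces F φ ∧ Deduces F (Formula.neg φ)

def MaximalConsistent (F : Set (Formula P V A)) : Prop :=
  Consistent F ∧ ∀ G : Set (Formula P V A), Consistent G → F ⊆ G → F = G

/-- A game. -/
structure Game (P V A : Type) : Type 1 where
  W : Type
  sim : V → W → W → Prop
  sim_equiv : ∀ x : V, Equivalence (sim x)
  trust : W → Set V
  Δ : Type
  delta_nonempty : Nonempty Δ
  M : W → (A → Δ) → W → Prop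
  pi : P → Set W

/-- `w ∼_X u`. -/
def Game.simSet (G : Game P V A) (X : Set V) (w u : G.W) : Prop :=
  ∀ x ∈ X, G.sim x w u

/-- The satisfaction relation `w ⊨ φ` (as `Sat G φ w`). -/
def Sat (G : Game P V A) : Formula P V A → G.W → Prop
  | Formula.atom p, w => w ∈ G.pi p
  | Formula.neg φ, w => ¬ Sat G φ w
  | Formula.imp φ ψ, w => Sat G φ w → Sat G ψ w
  | Formula.bel T X φ, w =>
      ∀ u : G.W, G.simSet X w u → T ⊆ G.trust u → Sat G φ u
  | Formula.str C T X φ, w =>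
      ∃ s : {a : A // a ∈ C} → G.Δ,
        ∀ (u v : G.W) (δ : A → G.Δ),
          G.simSet X w u → T ⊆ G.trust u →
          (∀ (a : A) (h : a ∈ C), s ⟨a, h⟩ = δ a) →
          G.M u δ v → T ⊆ G.trust v → Sat G φ v

/- ===================== Canonical game ===================== -/

/-- One block `X_i, b_i, T_i, F_i` of a canonical state. -/
structure Block (P V A B : Type) where
  X : Set V
  b : B
  T : Set V
  F : Set (Formula P V A)

variable {B : Type}

/-- `F(w)`: the last set of formulae of the sequence (or `F0` for the root). -/
def cF (F0 : Set (Formula P V A)) (l : List (Block P V A B)) : Set (Formula P V A) :=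
  l.getLast?.elim F0 Block.F

/-- `𝒯_w = T(w)`: the last dataset of the sequence (or `T0` for the root). -/
def cTrust (T0 : Set V) (l : List (Block P V A B)) : Set V :=
  l.getLast?.elim T0 Block.T

/-- Membership of a sequence in the set of canonical states `W`. -/
inductive IsState (T0 : Set V) (F0 : Set (Formula P V A)) :
    List (Block P V A B) → Prop
  | nil :
      (∀ (Y : Set V) (ψ : Formula P V A),
        Formula.imp (Formula.bel T0 Y ψ) ψ ∈ F0) →
      IsState T0 F0 []
  | snoc {l : List (Block P V A B)} {bl : Block P V A B} :
      IsState T0 F0 l →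
      MaximalConsistent bl.F →
      (∀ φ : Formula P V A, Formula.bel ∅ bl.X φ ∈ cF F0 l → φ ∈ bl.F) →
      (∀ (Y : Set V) (ψ : Formula P V A),
        Formula.imp (Formula.bel bl.T Y ψ) ψ ∈ bl.F) →
      IsState T0 F0 (l ++ [bl])

/-- The canonical states. -/
def CState (T0 : Set V) (F0 : Set (Formula P V A)) (B : Type) : Type :=
  {l : List (Block P V A B) // IsState T0 F0 l}

attribute [local instance] Classical.propDecidable

/-- Length of the longest common prefix of two sequences. -/
noncomputable def cpl {α : Type} : List α → List α → Nat
  | a :: as, b :: bs => if a = b then cpl as bs + 1 else 0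
  | _, _ => 0

/-- The blocks labelling the edges on the unique simple path between two
nodes of the canonical tree. -/
noncomputable def pathBlocks (w u : List (Block P V A B)) : List (Block P V A B) :=
  w.drop (cpl w u) ++ u.drop (cpl w u)

/-- `w ∼_x u` in the canonical game: every edge along the unique simple path
between `w` and `u` is labelled with `x`. -/
def csimVar (x : V) (w u : List (Block P V A B)) : Prop :=
  ∀ bl ∈ pathBlocks w u, x ∈ bl.X

/-- `w ∼_X u` in the canonical game. -/
def csim (X : Set V) (w u : List (Block P V A B)) : Prop :=
  ∀ x ∈ X, csimVar x w u

/-- The canonical mechanism `M`. -/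
def Mech (T0 : Set V) (F0 : Set (Formula P V A))
    (w : CState T0 F0 B) (δ : A → Formula P V A × CState T0 F0 B)
    (v : CState T0 F0 B) : Prop :=
  ∀ (C : Set A) (T X : Set V) (φ : Formula P V A),
    Formula.str C T X φ ∈ cF F0 w.1 →
    (∀ a ∈ C, (δ a).1 = φ) →
    (∀ a ∈ C, csim X w.1 (δ a).2.1) →
    T ⊆ cTrust T0 w.1 → T ⊆ cTrust T0 v.1 →
    φ ∈ cF F0 v.1

/-- Satisfaction `w ⊨ φ` on the canonical game (as `CSat T0 F0 φ w`). -/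
def CSat (T0 : Set V) (F0 : Set (Formula P V A)) :
    Formula P V A → CState T0 F0 B → Prop
  | Formula.atom p, w => Formula.atom p ∈ cF F0 w.1
  | Formula.neg φ, w => ¬ CSat T0 F0 φ w
  | Formula.imp φ ψ, w => CSat T0 F0 φ w → CSat T0 F0 ψ w
  | Formula.bel T X φ, w =>
      ∀ u : CState T0 F0 B, csim X w.1 u.1 → T ⊆ cTrust T0 u.1 → CSat T0 F0 φ u
  | Formula.str C T X φ, w =>
      ∃ s : {a : A // a ∈ C} → Formula P V A × CState T0 F0 B,
        ∀ (u v : CState T0 F0 B) (δ : A → Formula P V A × CState T0 F0 B),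
          csim X w.1 u.1 → T ⊆ cTrust T0 u.1 →
          (∀ (a : A) (h : a ∈ C), s ⟨a, h⟩ = δ a) →
          Mech T0 F0 u δ v → T ⊆ cTrust T0 v.1 → CSat T0 F0 φ v

/- ===================== Harmony ===================== -/

/-- Conjunction definable from ¬ and →. -/
def fand (φ ψ : Formula P V A) : Formula P V A :=
  Formula.neg (Formula.imp φ (Formula.neg ψ))

/-- A canonical tautology (verum). -/
noncomputable def verum (P V A : Type) [Nonempty (Formula P V A)] : Formula P V A :=
  Formula.imp (Classical.arbitrary (Formula P V A)) (Classical.arbitrary (Formula P V A))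

/-- Conjunction of a finite list of formulae. -/
noncomputable def conjList [Nonempty (Formula P V A)] :
    List (Formula P V A) → Formula P V A
  | [] => verum P V A
  | φ :: l => fand φ (conjList l)

/-- The pair `(F, G)` is in `T`-harmony: `F ⊬ [∅]^T_V ¬⋀G'` for each finite `G' ⊆ G`. -/
def THarmony [Nonempty (Formula P V A)] (T : Set V)
    (F G : Set (Formula P V A)) : Prop :=
  ∀ l : List (Formula P V A), (∀ ψ ∈ l, ψ ∈ G) →
    ¬ Deduces F (Formula.str ∅ T (Set.univ : Set V) (Formula.neg (conjList l)))

section HarmonyHelpers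

variable {P V A : Type}

lemma val_chain (v : Formula P V A → Prop)
    (hi : ∀ ψ χ, v (Formula.imp ψ χ) ↔ (v ψ → v χ)) (χ : Formula P V A)
    (m : List (Formula P V A)) :
    v (m.foldr Formula.imp χ) ↔ ((∀ s ∈ m, v s) → v χ) := by
  induction m with
  | nil => simp
  | cons a m ih => simp only [List.foldr_cons, hi, ih, List.forall_mem_cons]; tauto

lemma val_conj [Nonempty (Formula P V A)] (v : Formula P V A → Prop)
    (hn : ∀ ψ, v (Formula.neg ψ) ↔ ¬ v ψ)
    (hi : ∀ ψ χ, v (Formula.imp ψ χ) ↔ (v ψ → v χ))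
    (m : List (Formula P V A)) :
    v (conjList m) ↔ (∀ s ∈ m, v s) := by
  induction m with
  | nil => simp [conjList, verum, hi]
  | cons a m ih => simp only [conjList, fand, hi, hn, ih, List.forall_mem_cons]; tauto

lemma ded_bel {E F : Set (Formula P V A)} {T X : Set V}
    (h : ∀ χ ∈ F, Deduces E (Formula.bel T X χ)) {χ : Formula P V A}
    (hd : Deduces F χ) : Deduces E (Formula.bel T X χ) := by
  induction hd with
  | thm ht =>
    exact .thm (.mp (.monoB (Set.empty_subset _) (Set.empty_subset _)) (.nec ht))
  | mem hm => exact h _ hm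
  | mp _ _ ih1 ih2 => exact .mp (.mp (.thm .distrib) ih1) ih2

lemma ded_pub {E : Set (Formula P V A)} {T X : Set V} {χ : Formula P V A}
    (h : Deduces E (Formula.bel T ∅ χ)) : Deduces E (Formula.str ∅ T X χ) :=
  .mp (.thm (.monoS subset_rfl (Set.empty_subset _) subset_rfl)) (.mp (.thm .pub) h)

lemma ded_thm {E : Set (Formula P V A)} {T X : Set V} {χ : Formula P V A}
    (h : Thm χ) : Deduces E (Formula.str ∅ T X χ) :=
  ded_pub (.thm (.mp (.monoB (Set.empty_subset _) subset_rfl) (.nec h)))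

lemma ded_coop {E : Set (Formula P V A)} {K D : Set A} {T X : Set V} {χ ξ : Formula P V A}
    (hd : Disjoint K D) (h1 : Deduces E (Formula.str K T X (Formula.imp χ ξ)))
    (h2 : Deduces E (Formula.str D T X χ)) : Deduces E (Formula.str (K ∪ D) T X ξ) :=
  .mp (.mp (.thm (.coop (Set.disjoint_iff_inter_eq_empty.mp hd))) h1) h2

lemma ded_coop_empty {E : Set (Formula P V A)} {T X : Set V} {χ ξ : Formula P V A}
    (h1 : Deduces E (Formula.str ∅ T X (Formula.imp χ ξ)))
    (h2 : Deduces E (Formula.str ∅ T X χ)) : Deduces E (Formula.str ∅ T X ξ) := by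
  simpa using ded_coop (Set.disjoint_empty _) h1 h2

lemma ded_peel_pub {E : Set (Formula P V A)} {T X : Set V} {χ : Formula P V A}
    (m : List (Formula P V A)) (hm : ∀ s ∈ m, Deduces E (Formula.str ∅ T X s))
    (h : Deduces E (Formula.str ∅ T X (m.foldr Formula.imp χ))) :
    Deduces E (Formula.str ∅ T X χ) := by
  induction m with
  | nil => exact h
  | cons a m ih =>
    rw [List.forall_mem_cons] at hm
    exact ih hm.2 (ded_coop_empty h hm.1)

lemma ded_peel {E : Set (Formula P V A)} {C : Set A} {T X : Set V} {φ : Formula P V A}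
    {I : Type} {D : I → Set A} (hDsub : ∀ i, D i ⊆ C)
    (hDdisj : Pairwise (Function.onFun Disjoint D))
    {ψ : I → Formula P V A}
    (hψ : ∀ i, Formula.str (D i) T X (ψ i) ∈ E)
    (L : List I) (hL : L.Nodup) (K : Set A) (hK : K ⊆ C) (hKD : ∀ i ∈ L, Disjoint K (D i))
    (h : Deduces E (Formula.str K T X ((L.map ψ).foldr Formula.imp φ))) :
    Deduces E (Formula.str C T X φ) := by
  induction L generalizing K with
  | nil => exact .mp (.thm (.monoS subset_rfl subset_rfl hK)) h
  | cons a L ih =>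
    rw [List.nodup_cons] at hL
    rw [List.forall_mem_cons] at hKD
    refine ih hL.2 (K ∪ D a) (Set.union_subset hK (hDsub a)) (fun i hi => ?_)
      (ded_coop hKD.1 h (.mem (hψ a)))
    refine Set.disjoint_union_left.mpr ⟨hKD.2 i hi, hDdisj ?_⟩
    rintro rfl
    exact hL.1 hi

lemma exists_idx {I : Type} (ψ : I → Formula P V A) (Q : Formula P V A → Prop)
    (l : List (Formula P V A)) (hl : ∀ x ∈ l, Q x ∨ ∃ i, ψ i = x) :
    ∃ J : Finset I, ∀ x ∈ l, Q x ∨ ∃ i ∈ J, ψ i = x := by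
  classical
  induction l with
  | nil => exact ⟨∅, by simp⟩
  | cons a l ih =>
    rw [List.forall_mem_cons] at hl
    obtain ⟨J, hJ⟩ := ih hl.2
    rcases hl.1 with h | ⟨i, hi⟩
    · exact ⟨J, List.forall_mem_cons.mpr ⟨.inl h, hJ⟩⟩
    · refine ⟨insert i J, List.forall_mem_cons.mpr
        ⟨.inr ⟨i, Finset.mem_insert_self _ _, hi⟩, fun x hx => ?_⟩⟩
      rcases hJ x hx with h | ⟨j, hj, e⟩
      · exact .inl h
      · exact .inr ⟨j, Finset.mem_insert_of_mem hj, e⟩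

end HarmonyHelpers

/-- Harmony base lemma. -/
theorem harmony_base {P V A : Type} [Nonempty (Formula P V A)]
    (E : Set (Formula P V A)) (hE : Consistent E)
    (C : Set A) (T X : Set V) (φ : Formula P V A)
    (hneg : Formula.neg (Formula.str C T X φ) ∈ E)
    {I : Type} (D : I → Set A) (hDsub : ∀ i, D i ⊆ C)
    (hDdisj : Pairwise (Function.onFun Disjoint D))
    (ψ : I → Formula P V A)
    (hψ : ∀ i, Formula.str (D i) T X (ψ i) ∈ E) :
    THarmony T
      ({χ | Formula.bel ∅ X χ ∈ E} ∪
        {χ | ∃ (τ : Formula P V A) (Y : Set V),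
          χ = Formula.imp (Formula.bel T Y τ) τ})
      ({Formula.neg φ} ∪ Set.range ψ ∪
        {σ | Formula.bel ∅ ∅ σ ∈ E} ∪
        {χ | ∃ (η : Formula P V A) (Z : Set V),
          χ = Formula.imp (Formula.bel T Z η) η}) := by
  classical
  intro l hl hded
  have h1 : Deduces E (Formula.str ∅ T X (Formula.neg (conjList l))) := by
    refine .mp (.thm .unavoid) (ded_bel ?_ hded)
    rintro χ (h | ⟨τ, Y, rfl⟩)
    · exact .mp (.thm (.monoB (Set.empty_subset _) subset_rfl)) (.mem h)
    · exact .thm .trust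
  obtain ⟨J, hJ⟩ := exists_idx ψ
    (fun x => x = Formula.neg φ ∨ Deduces E (Formula.str ∅ T X x)) l (by
      intro x hx
      rcases hl x hx with ((h | h) | h) | ⟨η, Z, rfl⟩
      · exact .inl (.inl h)
      · exact .inr h
      · exact .inl (.inr (ded_pub (.mp (.thm (.monoB (Set.empty_subset _) subset_rfl)) (.mem h))))
      · exact .inl (.inr (ded_pub (.thm .trust))))
  let m := l.filter (fun x => decide (Deduces E (Formula.str ∅ T X x)))
  have hm : ∀ s ∈ m, Deduces E (Formula.str ∅ T X s) := by
    intro s hs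
    simpa using (List.mem_filter.mp hs).2
  have ht : Thm (Formula.imp (Formula.neg (conjList l))
      (m.foldr Formula.imp ((J.toList.map ψ).foldr Formula.imp φ))) := by
    refine .taut fun v hn hi => ?_
    rw [hi, hn, val_conj v hn hi, val_chain v hi, val_chain v hi]
    intro ha hb hc
    by_contra hφ
    apply ha
    intro s hs
    rcases hJ s hs with (rfl | h) | ⟨i, hiJ, rfl⟩
    · exact (hn _).mpr hφ
    · exact hb s (List.mem_filter.mpr ⟨hs, by simpa using h⟩)
    · exact hc _ (List.mem_map.mpr ⟨i, Finset.mem_toList.mpr hiJ, rfl⟩)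
  have h2 := ded_peel_pub m hm (ded_coop_empty (ded_thm ht) h1)
  exact hE ⟨_, ded_peel hDsub hDdisj hψ J.toList J.nodup_toList ∅ (Set.empty_subset _)
    (fun i _ => Set.empty_disjoint _) h2, .mem hneg⟩
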